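/- For all vectors ξ, X ∈ ℝ^7 and every symmetric 2-tensor h on ℝ^7, define the symmetric 2-tensor ω_{ab} = ξ_{m} φ^{mn}{}_{(a} h_{b)n} + (1/2) ξ_{(a} X_{b)}. Then the following algebraic identity holds: 2|ξ|²|X|² + 2⟨ξ,X⟩² + ξ_{m} ξ^{n} h_{np} φ^{mp}{}_{a} X^{a} + |ξ|²|h|² − ξ^{d} ξ^{a} h_{ae} h_{d}{}^{e} − ξ_{b} ξ_{m} h_{cn} h_{dp} φ^{bcd} φ^{mnp} = (7/4)( |ξ|²|X|² + ⟨ξ,X⟩² ) + 2 ω_{ab} ω^{ab}. In particular the left-hand side is nonnegative. (This is the key algebraic identity showing that the principal symbol of the modified Laplacian coflow operator pairs nonnegatively with closed forms, i.e. the weak parabolicity computation in Theorem 5.1 of the paper.) -/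

import Mathlib

open scoped BigOperators

/-- Components of the standard G₂ 3-form `φ` on the seven ordered (0-indexed) index
triples corresponding to `φ₁₂₃ = φ₁₄₅ = φ₁₆₇ = φ₂₄₆ = 1`, `φ₂₅₇ = φ₃₄₇ = φ₃₅₆ = -1`. -/
def phi0 : ℕ → ℕ → ℕ → ℝ
  | 0, 1, 2 => 1
  | 0, 3, 4 => 1
  | 0, 5, 6 => 1
  | 1, 3, 5 => 1
  | 1, 4, 6 => -1
  | 2, 3, 6 => -1
  | 2, 4, 5 => -1
  | _, _, _ => 0

/-- The standard G₂ 3-form `φ` on `ℝ⁷`, as a totally antisymmetric 3-tensor. -/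
def phi (a b c : Fin 7) : ℝ :=
  phi0 a.val b.val c.val - phi0 a.val c.val b.val + phi0 b.val c.val a.val
    - phi0 b.val a.val c.val + phi0 c.val a.val b.val - phi0 c.val b.val a.val

/-- The Levi-Civita symbol on seven indices, with `ε 1234567 = 1`. -/
noncomputable def eps (v : Fin 7 → Fin 7) : ℝ :=
  if h : Function.Bijective v then ((Equiv.Perm.sign (Equiv.ofBijective v h) : ℤ) : ℝ) else 0

/-- The 4-form `ψ = ⋆φ`, `ψ_{abcd} = (1/6) ε_{abcdmnp} φ^{mnp}`. -/
noncomputable def psi (a b c d : Fin 7) : ℝ :=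
  (1 / 6 : ℝ) * ∑ m : Fin 7, ∑ n : Fin 7, ∑ p : Fin 7,
    eps ![a, b, c, d, m, n, p] * phi m n p

/-- The Euclidean metric `g_{ab} = δ_{ab}` on `ℝ⁷`. -/
def gE (a b : Fin 7) : ℝ := if a = b then 1 else 0

/-- The symmetric 2-tensor `ω_{ab} = ξ_m φ^{mn}{}_{(a} h_{b)n} + (1/2) ξ_{(a} X_{b)}`. -/
noncomputable def omegaSym (ξ X : Fin 7 → ℝ) (h : Matrix (Fin 7) (Fin 7) ℝ)
    (a b : Fin 7) : ℝ :=
  (1 / 2 : ℝ) * ((∑ m : Fin 7, ∑ n : Fin 7, ξ m * phi m n a * h b n)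
      + (∑ m : Fin 7, ∑ n : Fin 7, ξ m * phi m n b * h a n))
    + (1 / 2 : ℝ) * ((1 / 2 : ℝ) * (ξ a * X b + ξ b * X a))

/-!
Contracting `φ` with `ξ` gives the skew-symmetric matrix `A` of `v ↦ v × ξ`, with `A ξ = 0` and
`A Aᵀ = |ξ|² - ξ ξᵀ`; of these facts only the last one is special to the `G₂` form. As a matrix,
`ω` is the symmetric part of `M = h A + ½ ξ Xᵀ`, so `2 |ω|² = tr (M Mᵀ) + tr (M M)`. When the right
side is expanded, `tr (h A (h A)ᵀ)` becomes `|ξ|² |h|² - |h ξ|²`, `tr (h A h A)` is the term with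
two factors `φ`, the cross term `ξ · h A X` is the term linear in `X`, and the other cross term
vanishes because `A ξ = 0`.
-/

section Matrices

open Matrix

section CommSemiring

variable {k l m n R : Type*} [Fintype n] [CommSemiring R]

theorem sum_sum_mul_self_eq_trace [Fintype m] (M : Matrix m n R) :
    ∑ a, ∑ b, M a b * M a b = trace (M * Mᵀ) :=
  rfl

theorem trace_add_transpose_mul_transpose (M : Matrix n n R) :
    trace ((M + Mᵀ) * (M + Mᵀ)ᵀ) = 2 * (trace (M * Mᵀ) + trace (M * M)) := by
  have trace_transpose_sq : trace (Mᵀ * Mᵀ) = trace (M * M) := by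
    rw [← transpose_mul, trace_transpose]
  simp only [transpose_add, transpose_transpose, add_mul, mul_add, trace_add, trace_transpose_sq,
    trace_mul_comm Mᵀ M]
  ring

theorem trace_add_smul_vecMulVec_mul_transpose [Fintype m] (P : Matrix m n R) (c : R)
    (u : m → R) (v : n → R) :
    trace ((P + c • vecMulVec u v) * (P + c • vecMulVec u v)ᵀ) =
      trace (P * Pᵀ) + 2 * c * (u ⬝ᵥ P *ᵥ v) + c ^ 2 * ((u ⬝ᵥ u) * (v ⬝ᵥ v)) := by
  have cross_term_left : trace (vecMulVec u v * Pᵀ) = u ⬝ᵥ P *ᵥ v := by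
    rw [vecMulVec_mul, vecMul_transpose, trace_vecMulVec]
  have cross_term_right : trace (P * vecMulVec v u) = u ⬝ᵥ P *ᵥ v := by
    rw [mul_vecMulVec, trace_vecMulVec, dotProduct_comm]
  simp only [transpose_add, transpose_smul, transpose_vecMulVec, Matrix.add_mul, Matrix.mul_add,
    smul_mul, Matrix.mul_smul, trace_add, trace_smul, cross_term_left, cross_term_right,
    vecMulVec_mul_vecMulVec, trace_vecMulVec, dotProduct_smul, smul_eq_mul]
  ring

theorem trace_add_smul_vecMulVec_mul_self (P : Matrix n n R) (c : R) (u v : n → R) :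
    trace ((P + c • vecMulVec u v) * (P + c • vecMulVec u v)) =
      trace (P * P) + 2 * c * (v ⬝ᵥ P *ᵥ u) + c ^ 2 * (u ⬝ᵥ v) ^ 2 := by
  have cross_term : trace (P * vecMulVec u v) = v ⬝ᵥ P *ᵥ u := by
    rw [mul_vecMulVec, trace_vecMulVec, dotProduct_comm]
  simp only [add_mul, mul_add, smul_mul, Matrix.mul_smul, trace_add, trace_smul,
    trace_mul_comm (vecMulVec u v) P, cross_term, vecMulVec_mul_vecMulVec, trace_vecMulVec,
    dotProduct_smul, dotProduct_comm v u, smul_eq_mul]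
  ring

theorem sum_mul_mul_mul_eq_dotProduct_transpose_mulVec [Fintype m] (ξ : m → R)
    (h : Matrix m n R) :
    ∑ d, ∑ a, ∑ e, ξ d * ξ a * h a e * h d e = (hᵀ *ᵥ ξ) ⬝ᵥ (hᵀ *ᵥ ξ) := by
  simp only [dotProduct, mulVec, transpose_apply, Finset.sum_mul_sum]
  rw [Finset.sum_comm_cycle]
  exact Finset.sum_congr rfl fun e _ => Finset.sum_congr rfl fun d _ =>
    Finset.sum_congr rfl fun a _ => by ring

theorem sum_mul_mul_mul_eq_trace (S T h : Matrix n n R) :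
    ∑ c, ∑ p, ∑ d, ∑ q, h c p * h d q * S c d * T p q = trace (S * h * Tᵀ * hᵀ) := by
  simp only [trace, diag_apply, mul_apply, transpose_apply, Finset.sum_mul]
  refine Finset.sum_congr rfl fun c _ => Finset.sum_congr rfl fun p _ => ?_
  rw [Finset.sum_comm]
  exact Finset.sum_congr rfl fun q _ => Finset.sum_congr rfl fun d _ => by ring

/-- The contraction `ξ^i T_{iab}` of a 3-tensor with a vector in the first slot, as a matrix in the
remaining indices `a, b`. -/
def contractFirst (T : n → l → m → R) (ξ : n → R) : Matrix l m R :=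
  ∑ i, ξ i • of (T i)

theorem contractFirst_apply (T : n → l → m → R) (ξ : n → R) (a : l) (b : m) :
    contractFirst T ξ a b = ∑ i, ξ i * T i a b := by
  simp [contractFirst, Matrix.sum_apply]

theorem mul_contractFirst_apply [Fintype l] (T : n → l → m → R) (ξ : n → R) (h : Matrix k l R)
    (a : k) (b : m) :
    (h * contractFirst T ξ) a b = ∑ i, ∑ j, ξ i * T i j b * h a j := by
  simp only [mul_apply, contractFirst_apply, Finset.mul_sum]
  rw [Finset.sum_comm]
  exact Finset.sum_congr rfl fun i _ => Finset.sum_congr rfl fun j _ => by ring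

theorem sum_eq_dotProduct_mul_contractFirst_mulVec (T : n → n → n → R) (ξ X : n → R)
    (h : Matrix n n R) :
    ∑ i, ∑ j, ∑ p, ∑ a, ξ i * ξ j * h j p * T i p a * X a =
      ξ ⬝ᵥ (h * contractFirst T ξ) *ᵥ X := by
  simp only [← mulVec_mulVec, contractFirst, sum_mulVec, smul_mulVec, mulVec_sum, mulVec_smul,
    dotProduct_sum, dotProduct_smul, smul_eq_mul]
  simp only [dotProduct, mulVec, Finset.mul_sum, of_apply, mul_assoc]

theorem sum_eq_trace_contractFirst (T : n → n → n → R) (ξ : n → R) (h : Matrix n n R) :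
    ∑ b, ∑ i, ∑ c, ∑ j, ∑ d, ∑ p, ξ b * ξ i * h c j * h d p * T b c d * T i j p =
      trace (contractFirst T ξ * h * (contractFirst T ξ)ᵀ * hᵀ) := by
  simp only [contractFirst, transpose_sum, transpose_smul, Matrix.sum_mul, Matrix.mul_sum,
    smul_mul, Matrix.mul_smul, trace_sum, trace_smul, smul_eq_mul, ← sum_mul_mul_mul_eq_trace,
    of_apply]
  rw [Finset.sum_comm]
  simp only [Finset.mul_sum, mul_assoc, mul_left_comm]

end CommSemiring

section CommRing

variable {l m n R : Type*} [Fintype n] [CommRing R]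

theorem trace_mul_mul_transpose_of_gram [Fintype l] [Fintype m] [DecidableEq m] {A : Matrix m n R}
    {ξ : m → R} (gram : A * Aᵀ = (ξ ⬝ᵥ ξ) • 1 - vecMulVec ξ ξ) (h : Matrix l m R) :
    trace (h * A * (h * A)ᵀ) = (ξ ⬝ᵥ ξ) * trace (h * hᵀ) - (h *ᵥ ξ) ⬝ᵥ (h *ᵥ ξ) := by
  rw [transpose_mul, Matrix.mul_assoc, ← Matrix.mul_assoc A, gram, Matrix.sub_mul, Matrix.mul_sub,
    trace_sub, smul_mul, Matrix.one_mul, Matrix.mul_smul, trace_smul, smul_eq_mul, vecMulVec_mul,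
    vecMul_transpose, mul_vecMulVec, trace_vecMulVec]

theorem trace_mul_mul_transpose_mul_transpose_of_skew {A h : Matrix n n R} (skew : Aᵀ = -A)
    (symm : h.IsSymm) : trace (A * h * Aᵀ * hᵀ) = -trace (h * A * (h * A)) := by
  rw [skew, symm.eq, trace_mul_comm, Matrix.mul_neg, Matrix.mul_neg, trace_neg]
  simp only [Matrix.mul_assoc]

theorem transpose_contractFirst {T : n → m → m → R} (skew : ∀ i a b, T i a b = -T i b a)
    (ξ : n → R) : (contractFirst T ξ)ᵀ = -contractFirst T ξ := by
  ext a b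
  simp only [transpose_apply, Matrix.neg_apply, contractFirst_apply, skew _ b a, mul_neg,
    Finset.sum_neg_distrib]

theorem contractFirst_mulVec_self [IsAddTorsionFree R] {T : n → m → n → R}
    (skew : ∀ i a b, T i a b = -T b a i) (ξ : n → R) : contractFirst T ξ *ᵥ ξ = 0 := by
  ext a
  refine self_eq_neg.mp ?_
  simp only [mulVec, dotProduct, contractFirst_apply, Finset.sum_mul, ← Finset.sum_neg_distrib]
  rw [Finset.sum_comm]
  exact Finset.sum_congr rfl fun i _ => Finset.sum_congr rfl fun b _ => by
    rw [skew i a b]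
    ring

end CommRing

end Matrices

section PhiContraction

open Matrix

theorem phi_swap_last (m a b : Fin 7) : phi m a b = -phi m b a := by
  unfold phi
  ring

theorem phi_swap_outer (m a b : Fin 7) : phi m a b = -phi b a m := by
  unfold phi
  ring

variable (ξ X : Fin 7 → ℝ)

set_option maxHeartbeats 1000000 in
-- There are 49 entries, each a sum of 42 values of `phi0`.
theorem contractFirst_phi_eq :
    contractFirst phi ξ =
      !![0, ξ 2, -ξ 1, ξ 4, -ξ 3, ξ 6, -ξ 5;
        -ξ 2, 0, ξ 0, ξ 5, -ξ 6, -ξ 3, ξ 4;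
        ξ 1, -ξ 0, 0, -ξ 6, -ξ 5, ξ 4, ξ 3;
        -ξ 4, -ξ 5, ξ 6, 0, ξ 0, ξ 1, -ξ 2;
        ξ 3, ξ 6, ξ 5, -ξ 0, 0, -ξ 2, -ξ 1;
        -ξ 6, ξ 3, -ξ 4, -ξ 1, ξ 2, 0, ξ 0;
        ξ 5, -ξ 4, -ξ 3, ξ 2, ξ 1, -ξ 0, 0] := by
  ext a b
  rw [contractFirst_apply, Fin.sum_univ_seven]
  fin_cases a <;> fin_cases b <;> simp [phi, phi0]

theorem contractFirst_phi_mul_transpose :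
    contractFirst phi ξ * (contractFirst phi ξ)ᵀ = (ξ ⬝ᵥ ξ) • 1 - vecMulVec ξ ξ := by
  ext a b
  simp only [mul_apply, transpose_apply, Matrix.sub_apply, Matrix.smul_apply, one_apply,
    vecMulVec_apply, dotProduct, Fin.sum_univ_seven, contractFirst_phi_eq]
  fin_cases a <;> fin_cases b <;> simp <;> ring

variable (h : Matrix (Fin 7) (Fin 7) ℝ)

theorem of_omegaSym_eq :
    of (omegaSym ξ X h) =
      (1 / 2 : ℝ) • ((h * contractFirst phi ξ + (1 / 2 : ℝ) • vecMulVec ξ X) +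
        (h * contractFirst phi ξ + (1 / 2 : ℝ) • vecMulVec ξ X)ᵀ) := by
  ext a b
  simp only [of_apply, omegaSym, Matrix.smul_apply, Matrix.add_apply, transpose_apply,
    vecMulVec_apply, mul_contractFirst_apply, smul_eq_mul]
  ring

theorem two_mul_sum_omegaSym_sq :
    2 * ∑ a, ∑ b, omegaSym ξ X h a b * omegaSym ξ X h a b =
      (ξ ⬝ᵥ ξ) * trace (h * hᵀ) - (h *ᵥ ξ) ⬝ᵥ (h *ᵥ ξ) +
        trace (h * contractFirst phi ξ * (h * contractFirst phi ξ)) +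
        ξ ⬝ᵥ (h * contractFirst phi ξ) *ᵥ X +
        1 / 4 * ((ξ ⬝ᵥ ξ) * (X ⬝ᵥ X) + (ξ ⬝ᵥ X) ^ 2) := by
  set P := h * contractFirst phi ξ with P_def
  set M := P + (1 / 2 : ℝ) • vecMulVec ξ X
  have P_mulVec_self : P *ᵥ ξ = 0 := by
    rw [P_def, ← mulVec_mulVec, contractFirst_mulVec_self phi_swap_outer, mulVec_zero]
  calc
    2 * ∑ a, ∑ b, omegaSym ξ X h a b * omegaSym ξ X h a b
      = 2 * trace (of (omegaSym ξ X h) * (of (omegaSym ξ X h))ᵀ) :=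
      congrArg (2 * ·) (sum_sum_mul_self_eq_trace (of (omegaSym ξ X h)))
    _ = trace (M * Mᵀ) + trace (M * M) := by
      rw [of_omegaSym_eq, transpose_smul, smul_mul, Matrix.mul_smul, trace_smul, trace_smul,
        trace_add_transpose_mul_transpose, smul_eq_mul, smul_eq_mul]
      ring
    _ = _ := by
      rw [trace_add_smul_vecMulVec_mul_transpose, trace_add_smul_vecMulVec_mul_self,
        P_mulVec_self, dotProduct_zero, P_def,
        trace_mul_mul_transpose_of_gram (contractFirst_phi_mul_transpose ξ)]
      ring

end PhiContraction

/-- The key algebraic identity behind the weak parabolicity of the modified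
Laplacian coflow: for all `ξ, X ∈ ℝ⁷` and every symmetric 2-tensor `h`,
`2|ξ|²|X|² + 2⟨ξ,X⟩² + ξ_m ξ^n h_{np} φ^{mp}{}_a X^a + |ξ|²|h|²
  - ξ^d ξ^a h_{ae} h_d{}^e - ξ_b ξ_m h_{cn} h_{dp} φ^{bcd} φ^{mnp}
  = (7/4)(|ξ|²|X|² + ⟨ξ,X⟩²) + 2 ω_{ab} ω^{ab} ≥ 0`. -/
theorem weak_parabolicity_identity (ξ X : Fin 7 → ℝ) (h : Matrix (Fin 7) (Fin 7) ℝ)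
    (hsymm : ∀ a b, h a b = h b a) :
    (2 * (∑ a : Fin 7, ξ a * ξ a) * (∑ a : Fin 7, X a * X a)
        + 2 * (∑ a : Fin 7, ξ a * X a) ^ 2
        + (∑ m : Fin 7, ∑ n : Fin 7, ∑ p : Fin 7, ∑ a : Fin 7,
            ξ m * ξ n * h n p * phi m p a * X a)
        + (∑ a : Fin 7, ξ a * ξ a) * (∑ a : Fin 7, ∑ b : Fin 7, h a b * h a b)
        - (∑ d : Fin 7, ∑ a : Fin 7, ∑ e : Fin 7, ξ d * ξ a * h a e * h d e)
        - (∑ b : Fin 7, ∑ m : Fin 7, ∑ c : Fin 7, ∑ n : Fin 7, ∑ d : Fin 7, ∑ p : Fin 7,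
            ξ b * ξ m * h c n * h d p * phi b c d * phi m n p)
      = (7 / 4 : ℝ) * ((∑ a : Fin 7, ξ a * ξ a) * (∑ a : Fin 7, X a * X a)
          + (∑ a : Fin 7, ξ a * X a) ^ 2)
        + 2 * ∑ a : Fin 7, ∑ b : Fin 7, omegaSym ξ X h a b * omegaSym ξ X h a b) ∧
    0 ≤ 2 * (∑ a : Fin 7, ξ a * ξ a) * (∑ a : Fin 7, X a * X a)
        + 2 * (∑ a : Fin 7, ξ a * X a) ^ 2
        + (∑ m : Fin 7, ∑ n : Fin 7, ∑ p : Fin 7, ∑ a : Fin 7,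
            ξ m * ξ n * h n p * phi m p a * X a)
        + (∑ a : Fin 7, ξ a * ξ a) * (∑ a : Fin 7, ∑ b : Fin 7, h a b * h a b)
        - (∑ d : Fin 7, ∑ a : Fin 7, ∑ e : Fin 7, ξ d * ξ a * h a e * h d e)
        - (∑ b : Fin 7, ∑ m : Fin 7, ∑ c : Fin 7, ∑ n : Fin 7, ∑ d : Fin 7, ∑ p : Fin 7,
            ξ b * ξ m * h c n * h d p * phi b c d * phi m n p) := by
  rw [and_iff_left_of_imp]
  · have h_symm : h.IsSymm := Matrix.IsSymm.ext fun a b => hsymm b a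
    have A_skew := transpose_contractFirst phi_swap_last ξ
    rw [two_mul_sum_omegaSym_sq, sum_eq_dotProduct_mul_contractFirst_mulVec,
      sum_sum_mul_self_eq_trace, sum_mul_mul_mul_eq_dotProduct_transpose_mulVec,
      sum_eq_trace_contractFirst, trace_mul_mul_transpose_mul_transpose_of_skew A_skew h_symm,
      h_symm.eq]
    simp only [dotProduct]
    ring
  · intro identity
    rw [identity]
    simp only [← sq]
    positivity
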